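/- Let s be a level-2 stack with |s| ≥ 2 and let q,q' be states of a level-2 collapsible pushdown system. There is a return from (q,s) to (q',Pop₂(s)) if and only if (q,q') ∈ ExRet(TOP₂(s)). -/

import Mathlib

namespace CPG

/-! ## Level-2 collapsible pushdown stacks -/

/-- Stack letters: `Sum.inl σ` is a letter with a level-1 link,
`Sum.inr (σ, k)` is a letter with a level-2 link to the substack of width `k`. -/
abbrev Letter (A : Type) := A ⊕ (A × ℕ)

def symOf {A : Type} : Letter A → A
  | Sum.inl a => a
  | Sum.inr (a, _) => a

def lvlOf {A : Type} : Letter A → ℕ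
  | Sum.inl _ => 1
  | Sum.inr _ => 2

abbrev Word (A : Type) := List (Letter A)

/-- A 2-word: a list of words; the last word is the topmost one. -/
abbrev Stack2 (A : Type) := List (Word A)

/-- The initial level-2 stack `⊥₂`. -/
def bottom2 {A : Type} (bot : A) : Stack2 A := [[Sum.inl bot]]

def top2 {A : Type} (s : Stack2 A) : Option (Word A) := s.getLast?

def top1 {A : Type} (s : Stack2 A) : Option (Letter A) := s.getLast?.bind List.getLast?

def symS {A : Type} (s : Stack2 A) : Option A := (top1 s).map symOf

def lvlS {A : Type} (s : Stack2 A) : Option ℕ := (top1 s).map lvlOf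

def lnkS {A : Type} (s : Stack2 A) : Option ℕ :=
  match top1 s, top2 s with
  | some (Sum.inr (_, j)), _ => some j
  | some (Sum.inl _), some w => some (w.length - 1)
  | _, _ => none

def clone2 {A : Type} (s : Stack2 A) : Option (Stack2 A) :=
  (top2 s).map fun w => s ++ [w]

def push1 {A : Type} [DecidableEq A] (bot a : A) (s : Stack2 A) : Option (Stack2 A) :=
  if a = bot then none else (top2 s).map fun w => s.dropLast ++ [w ++ [Sum.inl a]]

def push2 {A : Type} [DecidableEq A] (bot a : A) (s : Stack2 A) : Option (Stack2 A) :=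
  if a = bot then none else
    (top2 s).map fun w => s.dropLast ++ [w ++ [Sum.inr (a, s.length - 1)]]

def pop2 {A : Type} (s : Stack2 A) : Option (Stack2 A) :=
  if 1 < s.length then some s.dropLast else none

def pop1 {A : Type} (s : Stack2 A) : Option (Stack2 A) :=
  match s.getLast? with
  | some w => if 1 < w.length then some (s.dropLast ++ [w.dropLast]) else none
  | none => none

def collapse {A : Type} (s : Stack2 A) : Option (Stack2 A) :=
  match top1 s with
  | some (Sum.inr (_, k)) => if 0 < k then some (s.take k) else none
  | some (Sum.inl _) => pop1 s
  | none => none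

/-- The level-2 stack operations. -/
inductive Op (A : Type) where
  | clone2 | pop1 | pop2 | collapse
  | push1 (a : A) | push2 (a : A)

def applyOp {A : Type} [DecidableEq A] (bot : A) : Op A → Stack2 A → Option (Stack2 A)
  | .clone2 => clone2
  | .pop1 => pop1
  | .pop2 => pop2
  | .collapse => collapse
  | .push1 a => push1 bot a
  | .push2 a => push2 bot a

/-- `Stacks(Σ)` : the smallest set containing `⊥₂` and closed under the operations. -/
inductive IsStack {A : Type} [DecidableEq A] (bot : A) : Stack2 A → Prop where
  | base : IsStack bot (bottom2 bot)
  | step {s t : Stack2 A} (op : Op A) : IsStack bot s → applyOp bot op s = some t →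
      IsStack bot t

/-- Iterated application of a partial stack operation. -/
def iter {A : Type} (f : Stack2 A → Option (Stack2 A)) : ℕ → Stack2 A → Option (Stack2 A)
  | 0, s => some s
  | n + 1, s => (f s).bind (iter f n)

/-- `t` is a substack of `s`: `t = Pop₁ⁿ(Pop₂ᵐ(s))`. -/
def Substack {A : Type} (t s : Stack2 A) : Prop :=
  ∃ n m, (iter pop2 m s).bind (iter pop1 n) = some t

def ProperSubstack {A : Type} (t s : Stack2 A) : Prop := Substack t s ∧ t ≠ s

/-- `s` is a prefix of `t` (`s ⊑ t`). -/
def StackPrefix {A : Type} (s t : Stack2 A) : Prop :=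
  s ≠ [] ∧ s.length ≤ t.length ∧ s.dropLast <+: t ∧
    ∀ j, s.length - 1 ≤ j → j < t.length → s.getLastD [] <+: t.getD j []

/-- `t[s/u]` : the stack obtained from `t` by replacing the prefix `s` by `u`. -/
def substPrefix {A : Type} (t s u : Stack2 A) : Stack2 A :=
  u.dropLast ++
    (t.drop (s.length - 1)).map fun v => u.getLastD [] ++ v.drop (s.getLastD []).length

/-! ## Collapsible pushdown systems and runs -/

/-- A level-2 collapsible pushdown system. -/
structure CPS (Q A Γ : Type) where
  bot : A
  q0 : Q
  Δ : Set (Q × A × Γ × Q × Op A)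

variable {Q A Γ : Type} [DecidableEq A]

/-- A `γ`-labelled transition realized by the operation `op`. -/
def TransOp (S : CPS Q A Γ) (γ : Γ) (op : Op A) (c c' : Q × Stack2 A) : Prop :=
  ∃ σ : A, symS c.2 = some σ ∧ (c.1, σ, γ, c'.1, op) ∈ S.Δ ∧
    applyOp S.bot op c.2 = some c'.2

def Trans (S : CPS Q A Γ) (γ : Γ) (c c' : Q × Stack2 A) : Prop :=
  ∃ op, TransOp S γ op c c'

/-- A run of a collapsible pushdown system (recording configurations, labels and
operations of each step). -/
structure Run (S : CPS Q A Γ) where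
  len : ℕ
  cfg : ℕ → Q × Stack2 A
  lab : ℕ → Γ
  op : ℕ → Op A
  ok : ∀ i, i < len → TransOp S (lab i) (op i) (cfg i) (cfg (i + 1))

def Run.stk {S : CPS Q A Γ} (ρ : Run S) (i : ℕ) : Stack2 A := (ρ.cfg i).2

/-- The word of labels along a run. -/
def Run.labels {S : CPS Q A Γ} (ρ : Run S) : List Γ :=
  List.ofFn fun i : Fin ρ.len => ρ.lab i

/-- `Reach_L`-reachability: a run from `c` to `c'` labelled by a word in `L`. -/
def ReachL (S : CPS Q A Γ) (L : Language Γ) (c c' : Q × Stack2 A) : Prop :=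
  ∃ ρ : Run S, ρ.cfg 0 = c ∧ ρ.cfg ρ.len = c' ∧ ρ.labels ∈ L

/-- Plain reachability. -/
def Reach (S : CPS Q A Γ) (c c' : Q × Stack2 A) : Prop :=
  ∃ ρ : Run S, ρ.cfg 0 = c ∧ ρ.cfg ρ.len = c'

/-! ## ε-contraction -/

def oneLetterLang (γ : Γ) : Language Γ := {[γ]}

def nonEpsLang (eps : Γ) : Language Γ := {w | ∃ γ : Γ, γ ≠ eps ∧ w = [γ]}

/-- The language `{ε}*`. -/
def epsStar (eps : Γ) : Language Γ := KStar.kstar (oneLetterLang eps)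

/-- The language `({ε}*(Γ∖{ε}))*`. -/
def domLang (eps : Γ) : Language Γ :=
  KStar.kstar (epsStar eps * nonEpsLang eps)

/-- The language `{ε}*γ`. -/
def edgeLang (eps γ : Γ) : Language Γ := epsStar eps * oneLetterLang γ

/-- The vertex set of the ε-contraction `G/ε`. -/
def EpsDomain (S : CPS Q A Γ) (eps : Γ) : Set (Q × Stack2 A) :=
  {c | ReachL S (domLang eps) (S.q0, bottom2 S.bot) c}

/-! ## (Generalised) milestones and the order ≪ -/

/-- `wordAt bot s i` is the word `wᵢ` of `s`, with the convention `w₀ = ⊥`. -/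
def wordAt {A : Type} (bot : A) (s : Stack2 A) (i : ℕ) : Word A :=
  if i = 0 then [Sum.inl bot] else s.getD (i - 1) []

/-- Longest common prefix of two words. -/
def lcp {α : Type} [DecidableEq α] : List α → List α → List α
  | a :: s, b :: t => if a = b then a :: lcp s t else []
  | _, _ => []

/-- `m` is a generalised milestone of `s`. -/
def GenMilestone (bot : A) (s m : Stack2 A) : Prop :=
  ∃ i v, i < s.length ∧ m = s.take i ++ [v] ∧
    lcp (wordAt bot s i) (wordAt bot s (i + 1)) <+: v ∧
    (v <+: wordAt bot s i ∨ v <+: wordAt bot s (i + 1))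

/-- `m` is a milestone of `s`. -/
def Milestone (bot : A) (s m : Stack2 A) : Prop :=
  ∃ i v, i < s.length ∧ m = s.take i ++ [v] ∧
    lcp (wordAt bot s i) (wordAt bot s (i + 1)) <+: v ∧
    v <+: wordAt bot s (i + 1)

def genMilestones (bot : A) (s : Stack2 A) : Set (Stack2 A) := {m | GenMilestone bot s m}

def milestones (bot : A) (s : Stack2 A) : Set (Stack2 A) := {m | Milestone bot s m}

/-- The base cases of the partial order `≪`. -/
def llBase (bot : A) (s t : Stack2 A) : Prop :=
  s.length < t.length ∨
    (s ≠ [] ∧ s.length = t.length ∧ s.dropLast = t.dropLast ∧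
      ((t.getLastD [] <+: s.getLastD [] ∧ t.getLastD [] ≠ s.getLastD [] ∧
          s.getLastD [] <+: wordAt bot s (s.length - 1)) ∨
        (s.getLastD [] <+: t.getLastD [] ∧ s.getLastD [] ≠ t.getLastD [] ∧
          ¬ t.getLastD [] <+: wordAt bot s (s.length - 1))))

/-- The order `≪`: the smallest reflexive transitive relation containing `llBase`. -/
def ll (bot : A) : Stack2 A → Stack2 A → Prop := Relation.ReflTransGen (llBase bot)

/-- `m'` is the ≪-successor of `m` within `genMilestones bot s`. -/
def LlSuccessor (bot : A) (s m m' : Stack2 A) : Prop :=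
  GenMilestone bot s m ∧ GenMilestone bot s m' ∧ m ≠ m' ∧ ll bot m m' ∧
    ∀ m'', GenMilestone bot s m'' → ll bot m m'' → m'' ≠ m → ll bot m' m''

/-! ## Loops, returns and 1-loops -/

/-- The segment `[i,j]` of `ρ` is a loop (of its initial stack). -/
def LoopSeg {S : CPS Q A Γ} (ρ : Run S) (i j : ℕ) : Prop :=
  i ≤ j ∧ j ≤ ρ.len ∧ ρ.stk j = ρ.stk i ∧
    (∀ k, i ≤ k → k ≤ j → ∀ t, pop2 (ρ.stk i) = some t → ¬ Substack (ρ.stk k) t) ∧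
    (∀ k, i ≤ k → k ≤ j → ∀ m, 0 < m → ∀ t, iter pop1 m (ρ.stk i) = some t →
      ρ.stk k = t → ∀ m', m' < m → ∃ t', iter pop1 m' (ρ.stk i) = some t' ∧
        lvlS t' = some 1)

/-- A high loop: a loop that never visits `Pop₁` of its stack. -/
def HighLoopSeg {S : CPS Q A Γ} (ρ : Run S) (i j : ℕ) : Prop :=
  LoopSeg ρ i j ∧ ∀ k, i ≤ k → k ≤ j → ∀ t, pop1 (ρ.stk i) = some t → ρ.stk k ≠ t

/-- A low loop: a loop whose second and second-to-last stacks are `Pop₁` of its stack. -/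
def LowLoopSeg {S : CPS Q A Γ} (ρ : Run S) (i j : ℕ) : Prop :=
  LoopSeg ρ i j ∧ i < j ∧
    ∃ t, pop1 (ρ.stk i) = some t ∧ ρ.stk (i + 1) = t ∧ ρ.stk (j - 1) = t

/-- The common part of the definition of a return on the segment `[i,j]`:
it leads from its initial stack `t` to `Pop₂(t)` and never visits a substack
of `Pop₂(t)` before its final configuration. -/
def RetShell {S : CPS Q A Γ} (ρ : Run S) (i j : ℕ) : Prop :=
  i < j ∧ j ≤ ρ.len ∧ pop2 (ρ.stk i) = some (ρ.stk j) ∧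
    ∀ k, i ≤ k → k < j → ¬ Substack (ρ.stk k) (ρ.stk j)

/-- The segment `[i,j]` of `ρ` is a return (from its initial stack `t` to `Pop₂(t)`). -/
inductive RetSeg {S : CPS Q A Γ} (ρ : Run S) : ℕ → ℕ → Prop where
  | pop2 {i j : ℕ} (h : RetShell ρ i j) (hop : ρ.op (j - 1) = Op.pop2) : RetSeg ρ i j
  | collapse {i j : ℕ} (h : RetShell ρ i j) (hop : ρ.op (j - 1) = Op.collapse)
      (hpre : ∃ w w', top2 (ρ.stk i) = some w ∧ top2 (ρ.stk (j - 1)) = some w' ∧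
        w <+: w' ∧ w ≠ w') : RetSeg ρ i j
  | sub {i k j : ℕ} (h : RetShell ρ i j) (hik : i < k) (hkj : k ≤ j)
      (hpop : pop1 (ρ.stk i) = some (ρ.stk k)) (hret : RetSeg ρ k j) : RetSeg ρ i j

/-- The segment `[i,j]` of `ρ` is a level-1-loop. -/
def OneLoopSeg {S : CPS Q A Γ} (ρ : Run S) (i j : ℕ) : Prop :=
  i ≤ j ∧ j ≤ ρ.len ∧
    ∃ (s : Stack2 A) (w : Word A) (s' : Stack2 A),
      ρ.stk i = s ++ [w] ∧ ρ.stk j = s ++ s' ++ [w] ∧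
      (∀ k, i ≤ k → k ≤ j → s.length < (ρ.stk k).length) ∧
      (∀ k, i ≤ k → k ≤ j → 1 < w.length → top2 (ρ.stk k) = some w.dropLast →
        ∃ m, k < m ∧ m ≤ j ∧ RetSeg ρ k m)

/-! ## ExRet, ExLoop, ... -/

/-- `w↓₀` : replace every level-2 link by `0`. -/
def down0 {A : Type} : Word A → Word A :=
  List.map fun a => match a with
    | Sum.inl x => Sum.inl x
    | Sum.inr (x, _) => Sum.inr (x, 0)

def ExRet (S : CPS Q A Γ) (w : Word A) : Set (Q × Q) :=
  {p | ∃ ρ : Run S, ρ.cfg 0 = (p.1, [down0 w, down0 w]) ∧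
    ρ.cfg ρ.len = (p.2, [down0 w]) ∧ RetSeg ρ 0 ρ.len}

def ExLoop (S : CPS Q A Γ) (w : Word A) : Set (Q × Q) :=
  {p | ∃ ρ : Run S, ρ.cfg 0 = (p.1, [down0 w]) ∧ ρ.cfg ρ.len = (p.2, [down0 w]) ∧
    LoopSeg ρ 0 ρ.len}

def ExHLoop (S : CPS Q A Γ) (w : Word A) : Set (Q × Q) :=
  {p | ∃ ρ : Run S, ρ.cfg 0 = (p.1, [down0 w]) ∧ ρ.cfg ρ.len = (p.2, [down0 w]) ∧
    HighLoopSeg ρ 0 ρ.len}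

def ExLLoop (S : CPS Q A Γ) (w : Word A) : Set (Q × Q) :=
  {p | ∃ ρ : Run S, ρ.cfg 0 = (p.1, [down0 w]) ∧ ρ.cfg ρ.len = (p.2, [down0 w]) ∧
    LowLoopSeg ρ 0 ρ.len}

def ExOneLoop (S : CPS Q A Γ) (w : Word A) : Set (Q × Q) :=
  {p | ∃ (ρ : Run S) (s' : Stack2 A), ρ.cfg 0 = (p.1, [down0 w]) ∧
    ρ.cfg ρ.len = (p.2, s' ++ [down0 w]) ∧ OneLoopSeg ρ 0 ρ.len}

/-! ## Finite binary trees -/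

/-- Finite binary trees with labels in `α` and optional left/right children. -/
inductive PTree (α : Type) where
  | node (a : α) (l r : Option (PTree α)) : PTree α

/-- The label of the node at address `d` (`false` = left/0, `true` = right/1). -/
def PTree.labelAt {α : Type} : PTree α → List Bool → Option α
  | .node a _ _, [] => some a
  | .node _ (some t) _, false :: d => t.labelAt d
  | .node _ none _, false :: _ => none
  | .node _ _ (some t), true :: d => t.labelAt d
  | .node _ _ none, true :: _ => none

def PTree.map {α β : Type} (f : α → β) : PTree α → PTree β
  | .node a l r =>
    .node (f a)
      (match l with | none => none | some t => some (t.map f))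
      (match r with | none => none | some t => some (t.map f))

/-- Convolution of two trees, with `none` as padding symbol `□`. -/
def PTree.conv {α β : Type} : PTree α → PTree β → PTree (Option α × Option β)
  | .node a l r, .node b l' r' =>
    .node (some a, some b)
      (match l, l' with
        | none, none => none
        | some t, none => some (t.map fun x => (some x, none))
        | none, some u => some (u.map fun x => (none, some x))
        | some t, some u => some (PTree.conv t u))
      (match r, r' with
        | none, none => none
        | some t, none => some (t.map fun x => (some x, none))
        | none, some u => some (u.map fun x => (none, some x))
        | some t, some u => some (PTree.conv t u))

/-- A (bottom-up nondeterministic) finite tree automaton. -/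
structure TreeAut (α : Type) where
  St : Type
  fin : Finite St
  qI : St
  F : Set St
  Δ : Set (St × α × St × St)

/-- Acceptance of a finite tree by a tree automaton. -/
def TreeAut.Accepts {α : Type} (M : TreeAut α) (t : PTree α) : Prop :=
  ∃ ρ : List Bool → M.St,
    (∀ d, t.labelAt d = none → ρ d = M.qI) ∧
    (∀ d a, t.labelAt d = some a → (ρ d, a, ρ (d ++ [false]), ρ (d ++ [true])) ∈ M.Δ) ∧
    ρ [] ∈ M.F

/-- A family of binary relations on `B` is tree-automatic. -/
def IsTreeAutomatic {B : Type} {I : Type} (E : I → B → B → Prop) : Prop :=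
  ∃ (α : Type) (_ : Finite α) (AB : TreeAut α) (AE : I → TreeAut (Option α × Option α))
    (f : {t : PTree α // AB.Accepts t} → B),
    Function.Bijective f ∧
      ∀ (i : I) (t₁ t₂ : {t : PTree α // AB.Accepts t}),
        (AE i).Accepts (PTree.conv t₁.1 t₂.1) ↔ E i (f t₁) (f t₂)

/-! ## The encoding of configurations as trees -/

/-- Labels of encoding trees: a state, a pair (symbol, link level), or `ε`. -/
abbrev EncLabel (Q A : Type) := Q ⊕ ((A × ℕ) ⊕ Unit)

def epsLab {Q A : Type} : EncLabel Q A := Sum.inr (Sum.inr ())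

def symLab {Q A : Type} (τ : Letter A) : EncLabel Q A := Sum.inr (Sum.inl (symOf τ, lvlOf τ))

/-- Encoding of blocklines as trees (with a fuel parameter driving the recursion;
the fuel used in `encStack` is large enough so that it never runs out on actual
blocklines). The left subtree encodes the blockline induced by the first maximal
block, the right subtree the remaining blocks. -/
def encBL (Q : Type) {A : Type} [DecidableEq A] :
    ℕ → EncLabel Q A → List (Word A) → PTree (EncLabel Q A)
  | 0, σ, _ => .node σ none none
  | _ + 1, σ, [] => .node σ none none
  | fuel + 1, σ, w :: rest =>
    if w.length ≤ 1 then
      match rest with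
      | [] => .node σ none none
      | _ :: _ => .node σ none (some (encBL Q fuel epsLab rest))
    else
      let p : Word A → Bool := fun v => decide (v.take 2 = w.take 2)
      let blk := (w :: rest).takeWhile p
      let restBlk := (w :: rest).dropWhile p
      .node σ
        (some (encBL Q fuel
          (match w[1]? with | some τ' => symLab τ' | none => epsLab)
          (blk.map List.tail)))
        (match restBlk with
          | [] => none
          | _ :: _ => some (encBL Q fuel epsLab restBlk))

/-- The total number of letters of a 2-word. -/
def size2 {A : Type} (s : Stack2 A) : ℕ := (s.map List.length).sum

/-- The encoding `Enc(s) = Enc(s, (⊥,1))` of a stack. -/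
def encStack (Q : Type) {A : Type} [DecidableEq A] (bot : A) (s : Stack2 A) :
    PTree (EncLabel Q A) :=
  encBL Q (size2 s + 1) (Sum.inr (Sum.inl (bot, 1))) s

/-- The encoding of a configuration: the state at the root, `Enc(s)` as left subtree. -/
def Enc {Q A : Type} [DecidableEq A] (bot : A) (c : Q × Stack2 A) : PTree (EncLabel Q A) :=
  .node (Sum.inl c.1) (some (encStack Q bot c.2)) none

/-- The class `EncTrees` of encoding trees. -/
def EncTrees (Q A : Type) (bot : A) : Set (PTree (EncLabel Q A)) :=
  {T | (∃ q : Q, T.labelAt [] = some (Sum.inl q)) ∧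
    T.labelAt [true] = none ∧ T.labelAt [false] ≠ none ∧
    T.labelAt [false] = some (Sum.inr (Sum.inl (bot, 1))) ∧
    (∀ (d : List Bool) (x : EncLabel Q A),
      T.labelAt (false :: (d ++ [false])) = some x →
        ∃ (σ : A) (l : ℕ), σ ≠ bot ∧ (l = 1 ∨ l = 2) ∧ x = Sum.inr (Sum.inl (σ, l))) ∧
    (∀ (d : List Bool) (x : EncLabel Q A), T.labelAt (d ++ [true]) = some x → x = epsLab) ∧
    (∀ (d : List Bool) (σ : A), ¬ (T.labelAt (d ++ [false]) = some (Sum.inr (Sum.inl (σ, 1))) ∧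
      T.labelAt (d ++ [true, false]) = some (Sum.inr (Sum.inl (σ, 1)))))}

/-- Restriction of a tree to the nodes lexicographically ≤ `d`. -/
def restrictLex {α : Type} : PTree α → List Bool → PTree α
  | .node a _ _, [] => .node a none none
  | .node a l _, false :: d =>
      .node a (match l with | none => none | some t => some (restrictLex t d)) none
  | .node a l r, true :: d =>
      .node a l (match r with | none => none | some t => some (restrictLex t d))

/-- The lexicographic order on tree addresses. -/
def lexLe (d e : List Bool) : Prop :=
  d <+: e ∨ ∃ (c x y : List Bool), d = c ++ false :: x ∧ e = c ++ true :: y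

/-! ## Deterministic finite automata with output (Moore machines) -/

structure Moore (α ω : Type) where
  St : Type
  fin : Finite St
  init : St
  step : St → α → St
  out : St → ω

def Moore.output {α ω : Type} (M : Moore α ω) (w : List α) : ω :=
  M.out (w.foldl M.step M.init)

/-! ## Helper lemmas -/

section Helpers

set_option linter.unusedSectionVars false

theorem word_cases {α : Type} (v : List α) : v = [] ∨ ∃ v' a, v = v' ++ [a] := by
  rcases List.eq_nil_or_concat v with h | ⟨l, a, h⟩
  · exact Or.inl h
  · exact Or.inr ⟨l, a, by simpa using h⟩

/-- Description of the effect of an operation on a stack of width at least two. -/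
theorem step_desc (bot : A) (op : Op A) (b : Word A) (vs1 : Stack2 A) (v : Word A)
    (t : Stack2 A) (h : applyOp bot op (b :: (vs1 ++ [v])) = some t) :
    ∃ vs', t = b :: vs' ∧
      (vs' <+: vs1 ++ [v] ∨ vs' = vs1 ++ [v] ++ [v] ∨
        (∃ a, vs' = vs1 ++ [v ++ [Sum.inl a]]) ∨
        (∃ a, vs' = vs1 ++ [v ++ [Sum.inr (a, vs1.length + 1)]]) ∨
        (∃ v' a, v = v' ++ [a] ∧ v' ≠ [] ∧ vs' = vs1 ++ [v'])) := by
  have hg : (b :: (vs1 ++ [v])).getLast? = some v := by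
    rw [← List.cons_append, List.getLast?_concat]
  have hd : (b :: (vs1 ++ [v])).dropLast = b :: vs1 := by
    rw [← List.cons_append, List.dropLast_concat]
  have hpop1 : ∀ t, pop1 (b :: (vs1 ++ [v])) = some t →
      ∃ v' a, v = v' ++ [a] ∧ v' ≠ [] ∧ t = b :: (vs1 ++ [v']) := by
    intro t h
    simp only [pop1, hg, hd] at h
    split_ifs at h with hl
    rcases word_cases v with rfl | ⟨v', a, rfl⟩
    · simp at hl
    · refine ⟨v', a, rfl, ?_, ?_⟩
      · rintro rfl; simp at hl
      · simpa using h.symm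
  cases op with
  | clone2 =>
    simp only [applyOp, clone2, top2, hg, Option.map_some, Option.some.injEq] at h
    exact ⟨vs1 ++ [v] ++ [v], by rw [← h]; simp, by simp⟩
  | pop1 =>
    obtain ⟨v', a, h1, h2, h3⟩ := hpop1 t h
    exact ⟨_, h3, by right; right; right; right; exact ⟨v', a, h1, h2, rfl⟩⟩
  | pop2 =>
    simp only [applyOp, pop2, hd] at h
    split_ifs at h
    exact ⟨vs1, by simpa using h.symm, Or.inl (List.prefix_append _ _)⟩
  | collapse =>
    simp only [applyOp, collapse, top1, hg, Option.bind_some] at h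
    rcases hv : v.getLast? with _ | (x | ⟨x, k⟩)
    · simp [hv] at h
    · simp only [hv] at h
      obtain ⟨v', a, h1, h2, h3⟩ := hpop1 t h
      exact ⟨_, h3, by right; right; right; right; exact ⟨v', a, h1, h2, rfl⟩⟩
    · simp only [hv] at h
      split_ifs at h with hk
      obtain ⟨k, rfl⟩ : ∃ k', k = k' + 1 := ⟨k - 1, by omega⟩
      simp only [List.take_succ_cons, Option.some.injEq] at h
      exact ⟨_, h.symm, Or.inl (List.take_prefix _ _)⟩
  | push1 a =>
    simp only [applyOp, push1, top2, hg, hd] at h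
    split_ifs at h
    simp only [Option.map_some, Option.some.injEq] at h
    exact ⟨vs1 ++ [v ++ [Sum.inl a]], by rw [← h]; simp, by
      right; right; left; exact ⟨a, rfl⟩⟩
  | push2 a =>
    simp only [applyOp, push2, top2, hg, hd] at h
    split_ifs at h
    simp only [Option.map_some, Option.some.injEq] at h
    exact ⟨vs1 ++ [v ++ [Sum.inr (a, vs1.length + 1)]], by rw [← h]; simp, by
      right; right; right; left; exact ⟨a, rfl⟩⟩

theorem iter_pop1_length {n : ℕ} : ∀ {s t : Stack2 A}, iter pop1 n s = some t →
    t.length = s.length := by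
  induction n with
  | zero => intro s t h; simp only [iter, Option.some.injEq] at h; rw [h]
  | succ n ih =>
    intro s t h
    simp only [iter, Option.bind_eq_some_iff] at h
    obtain ⟨s', h1, h2⟩ := h
    rw [ih h2]
    rcases word_cases s with rfl | ⟨s0, w, rfl⟩
    · simp [pop1] at h1
    · simp only [pop1, List.getLast?_concat, List.dropLast_concat] at h1
      split_ifs at h1
      simp only [Option.some.injEq] at h1
      rw [← h1]; simp

theorem iter_pop2_length {n : ℕ} : ∀ {s t : Stack2 A}, iter pop2 n s = some t →
    t.length ≤ s.length := by
  induction n with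
  | zero => intro s t h; simp only [iter, Option.some.injEq] at h; rw [h]
  | succ n ih =>
    intro s t h
    simp only [iter, Option.bind_eq_some_iff] at h
    obtain ⟨s', h1, h2⟩ := h
    refine (ih h2).trans ?_
    simp only [pop2] at h1
    split_ifs at h1
    simp only [Option.some.injEq] at h1
    rw [← h1]; simp

theorem Substack.length_le {s t : Stack2 A} (h : Substack t s) : t.length ≤ s.length := by
  obtain ⟨n, m, h⟩ := h
  simp only [Option.bind_eq_some_iff] at h
  obtain ⟨s', h1, h2⟩ := h
  rw [iter_pop1_length h2]
  exact iter_pop2_length h1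

theorem Substack.refl (s : Stack2 A) : Substack s s := ⟨0, 0, by simp [iter]⟩

theorem iter_pop2_take (m : ℕ) : ∀ (u : Stack2 A), m < u.length →
    iter pop2 m u = some (u.take (u.length - m)) := by
  induction m with
  | zero => intro u _; simp [iter]
  | succ m ih =>
    intro u hu
    have h1 : 1 < u.length := by omega
    simp only [iter, pop2, h1, if_true, Option.bind_some]
    rw [ih _ (by rw [List.length_dropLast]; omega)]
    rw [List.dropLast_eq_take, List.take_take, List.length_take]
    congr 2; omega

theorem Substack.take (u : Stack2 A) (k : ℕ) (h0 : 0 < k) (hk : k ≤ u.length) :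
    Substack (u.take k) u := by
  refine ⟨0, u.length - k, ?_⟩
  rw [iter_pop2_take _ _ (by omega)]
  simp only [Option.bind_some, iter]
  congr 2; omega

theorem RetSeg.shell {S : CPS Q A Γ} {ρ : Run S} {i j : ℕ} (h : RetSeg ρ i j) :
    RetShell ρ i j := by
  cases h <;> assumption

/-- In a valid stack the links in the `i`-th word are bounded by `i`. -/
def LinksOk (s : Stack2 A) : Prop :=
  ∀ (i : ℕ) (v : Word A), s[i]? = some v → ∀ (x : A) (k : ℕ), Sum.inr (x, k) ∈ v → k ≤ i

theorem LinksOk.take {s : Stack2 A} (h : LinksOk s) (n : ℕ) : LinksOk (s.take n) := by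
  intro i v hv
  rw [List.getElem?_take] at hv
  split_ifs at hv
  exact h i v hv

theorem LinksOk.snoc {s : Stack2 A} {w : Word A} (h : LinksOk s)
    (hw : ∀ x k, Sum.inr (x, k) ∈ w → k ≤ s.length) : LinksOk (s ++ [w]) := by
  intro i v hv
  rw [List.getElem?_append] at hv
  split_ifs at hv with hi
  · exact h i v hv
  · rw [List.getElem?_singleton] at hv
    split_ifs at hv with h0
    simp only [Option.some.injEq] at hv
    subst hv
    intro x k hx
    have := hw x k hx
    omega

theorem LinksOk.of_snoc {s : Stack2 A} {w : Word A} (h : LinksOk (s ++ [w])) :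
    LinksOk s ∧ ∀ x k, Sum.inr (x, k) ∈ w → k ≤ s.length := by
  constructor
  · have := h.take s.length
    simpa using this
  · exact h s.length w (by simp)

theorem isStack_linksOk {bot : A} {s : Stack2 A} (hs : IsStack bot s) : LinksOk s := by
  induction hs with
  | base =>
    intro i v hv x k hx
    rw [bottom2, List.getElem?_singleton] at hv
    split_ifs at hv
    simp only [Option.some.injEq] at hv
    subst hv
    simp at hx
  | @step s t op _ hst ih =>
    rcases word_cases s with rfl | ⟨u, w, rfl⟩
    · cases op <;> simp [applyOp, clone2, top2, pop1, pop2, collapse, top1, push1, push2] at hst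
    obtain ⟨hu, hw⟩ := ih.of_snoc
    have hpop1 : ∀ t, pop1 (u ++ [w]) = some t → LinksOk t := by
      intro t h
      simp only [pop1, List.getLast?_concat, List.dropLast_concat] at h
      split_ifs at h
      simp only [Option.some.injEq] at h
      subst h
      exact hu.snoc fun x k hx => hw x k (List.mem_of_mem_dropLast hx)
    cases op with
    | clone2 =>
      simp only [applyOp, clone2, top2, List.getLast?_concat, Option.map_some,
        Option.some.injEq] at hst
      subst hst
      refine ih.snoc fun x k hx => ?_
      have := hw x k hx
      simp; omega
    | pop1 => exact hpop1 t hst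
    | pop2 =>
      simp only [applyOp, pop2, List.dropLast_concat] at hst
      split_ifs at hst
      simp only [Option.some.injEq] at hst
      subst hst; exact hu
    | collapse =>
      simp only [applyOp, collapse, top1, List.getLast?_concat, Option.bind_some] at hst
      rcases hv : w.getLast? with _ | (x | ⟨x, k⟩)
      · simp [hv] at hst
      · simp only [hv] at hst
        exact hpop1 t hst
      · simp only [hv] at hst
        split_ifs at hst
        simp only [Option.some.injEq] at hst
        subst hst; exact ih.take _
    | push1 a =>
      simp only [applyOp, push1, top2, List.getLast?_concat, List.dropLast_concat] at hst
      split_ifs at hst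
      simp only [Option.map_some, Option.some.injEq] at hst
      subst hst
      refine hu.snoc fun x k hx => ?_
      simp at hx
      exact hw x k hx
    | push2 a =>
      simp only [applyOp, push2, top2, List.getLast?_concat, List.dropLast_concat] at hst
      split_ifs at hst
      simp only [Option.map_some, Option.some.injEq] at hst
      subst hst
      refine hu.snoc fun x k hx => ?_
      simp at hx
      rcases hx with hx | ⟨_, rfl⟩
      · exact hw x k hx
      · exact le_rfl

/-! ### The simulation map -/

/-- Letter translation at position `p`. -/
def simL (old : ℕ → ℕ) (n p : ℕ) : Letter A → Letter A
  | Sum.inl x => Sum.inl x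
  | Sum.inr (x, 0) => Sum.inr (x, old p)
  | Sum.inr (x, k + 1) => Sum.inr (x, n + k)

def simW (old : ℕ → ℕ) (n : ℕ) (v : Word A) : Word A := v.mapIdx (simL old n)

/-- Stack translation: replace the base word by the stack `u`. -/
def simS (old : ℕ → ℕ) (u : Stack2 A) (s : Stack2 A) : Stack2 A :=
  u ++ s.tail.map (simW old u.length)

theorem simW_concat (old : ℕ → ℕ) (n : ℕ) (v : Word A) (a : Letter A) :
    simW old n (v ++ [a]) = simW old n v ++ [simL old n v.length a] := by
  simp [simW]

theorem simW_length (old : ℕ → ℕ) (n : ℕ) (v : Word A) :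
    (simW old n v).length = v.length := by
  simp [simW]

theorem simW_prefix (old : ℕ → ℕ) (n : ℕ) {v v' : Word A} (h : v <+: v') :
    simW old n v <+: simW old n v' := by
  obtain ⟨r, rfl⟩ := h
  simp [simW, List.mapIdx_append]

theorem simS_eq (old : ℕ → ℕ) (u : Stack2 A) (b : Word A) (vs : Stack2 A) (v : Word A) :
    simS old u (b :: (vs ++ [v])) =
      (u ++ vs.map (simW old u.length)) ++ [simW old u.length v] := by
  simp [simS]

theorem simS_top2 (old : ℕ → ℕ) (u : Stack2 A) (b : Word A) (vs : Stack2 A) (v : Word A) :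
    top2 (simS old u (b :: (vs ++ [v]))) = some (simW old u.length v) := by
  rw [simS_eq, top2, List.getLast?_concat]

theorem base_top2 (b : Word A) (vs : Stack2 A) (v : Word A) :
    top2 (b :: (vs ++ [v])) = some v := by
  rw [← List.cons_append, top2, List.getLast?_concat]

theorem symOf_simL (old : ℕ → ℕ) (n p : ℕ) (a : Letter A) :
    symOf (simL old n p a) = symOf a := by
  rcases a with x | ⟨x, _ | k⟩ <;> rfl

theorem simS_symS (old : ℕ → ℕ) (u : Stack2 A) (b : Word A) (vs : Stack2 A) (v : Word A) :
    symS (simS old u (b :: (vs ++ [v]))) = symS (b :: (vs ++ [v])) := by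
  have h1 := simS_top2 old u b vs v
  have h2 := base_top2 b vs v
  simp only [top2] at h1 h2
  simp only [symS, top1, h1, h2, Option.bind_some]
  rcases word_cases v with rfl | ⟨v', a, rfl⟩
  · rfl
  · simp [simW_concat, symOf_simL]

theorem simS_pop1 (old : ℕ → ℕ) (u : Stack2 A) (b : Word A) (vs : Stack2 A) (v : Word A) :
    pop1 (simS old u (b :: (vs ++ [v]))) =
      (pop1 (b :: (vs ++ [v]))).map (simS old u) := by
  rw [simS_eq, ← List.cons_append]
  simp only [pop1, List.getLast?_concat, List.dropLast_concat, simW_length]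
  split_ifs
  · rw [Option.map_some, List.cons_append, simS_eq]
    rcases word_cases v with rfl | ⟨v', a, rfl⟩
    · rfl
    · simp [simW_concat]
  · rfl

theorem simS_pop2 (old : ℕ → ℕ) (u : Stack2 A) (hu : u ≠ []) (b : Word A) (vs : Stack2 A)
    (v : Word A) :
    pop2 (simS old u (b :: (vs ++ [v]))) =
      (pop2 (b :: (vs ++ [v]))).map (simS old u) := by
  have := List.length_pos_iff.2 hu
  rw [simS_eq, ← List.cons_append]
  simp only [pop2, List.dropLast_concat]
  rw [if_pos (by simp; omega), if_pos (by simp)]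
  simp [simS]

/-- The translation commutes with all operations, except for collapses on old links. -/
theorem simS_step (bot : A) (old : ℕ → ℕ) (u : Stack2 A) (hu : u ≠ []) (op : Op A)
    (b : Word A) (vs : Stack2 A) (v : Word A)
    (hop : op = Op.collapse → ∀ x, v.getLast? ≠ some (Sum.inr (x, 0))) :
    applyOp bot op (simS old u (b :: (vs ++ [v]))) =
      (applyOp bot op (b :: (vs ++ [v]))).map (simS old u) := by
  have hun := List.length_pos_iff.2 hu
  cases op with
  | pop1 => exact simS_pop1 old u b vs v
  | pop2 => exact simS_pop2 old u hu b vs v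
  | clone2 =>
    simp only [applyOp, clone2, simS_top2, base_top2, Option.map_some]
    simp [simS]
  | push1 a =>
    simp only [applyOp, push1, simS_top2, base_top2, Option.map_some]
    split_ifs
    · rfl
    · rw [simS_eq, ← List.cons_append, List.dropLast_concat, List.dropLast_concat,
        Option.map_some, List.cons_append, simS_eq, simW_concat]
      rfl
  | push2 a =>
    simp only [applyOp, push2, simS_top2, base_top2, Option.map_some]
    split_ifs
    · rfl
    · rw [simS_eq, ← List.cons_append, List.dropLast_concat, List.dropLast_concat,
        Option.map_some, List.cons_append, simS_eq, simW_concat]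
      simp [simL]
  | collapse =>
    have h1 := simS_top2 old u b vs v
    have h2 := base_top2 b vs v
    simp only [top2] at h1 h2
    simp only [applyOp, collapse, top1, h1, h2, Option.bind_some]
    rcases word_cases v with rfl | ⟨v', a, rfl⟩
    · rfl
    · simp only [simW_concat, List.getLast?_concat]
      rcases a with x | ⟨x, _ | k⟩
      · exact simS_pop1 old u b vs _
      · exact absurd (by simp) (hop rfl x)
      · simp only [simL]
        rw [if_pos (by omega), if_pos (by omega), Option.map_some]
        simp [simS, List.take_append, List.map_take, List.take_of_length_le]

/-- A collapse on an old link leads below the base. -/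
theorem simS_collapse_old (old : ℕ → ℕ) (u : Stack2 A) (hold : ∀ p, old p ≤ u.length)
    (b : Word A) (vs : Stack2 A) (v : Word A) (x : A)
    (hv : v.getLast? = some (Sum.inr (x, 0))) (t : Stack2 A)
    (h : collapse (simS old u (b :: (vs ++ [v]))) = some t) : Substack t u := by
  have h1 := simS_top2 old u b vs v
  simp only [top2] at h1
  rcases word_cases v with rfl | ⟨v', a, rfl⟩
  · simp at hv
  · simp only [List.getLast?_concat, Option.some.injEq] at hv
    subst hv
    simp only [collapse, top1, h1, Option.bind_some, simW_concat, List.getLast?_concat,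
      simL] at h
    split_ifs at h with hk
    simp only [Option.some.injEq] at h
    have := hold v'.length
    rw [← h, simS, List.take_append_of_le_length this]
    exact Substack.take _ _ hk this

/-! ### Invariants along runs over a base word -/

/-- After a visit of `[b, x]`, no letter with link `0` occurs at a position `≥ |x|`. -/
theorem no_old_inv (bot b : _) (a : ℕ → Stack2 A) (op : ℕ → Op A) (N i : ℕ) (x : Word A)
    (hstep : ∀ k, k + 1 < N → applyOp bot (op k) (a k) = some (a (k + 1)))
    (hw : ∀ k, k < N → ∃ vs1 v, a k = b :: (vs1 ++ [v]))
    (hi : a i = [b, x]) (k : ℕ) (hik : i ≤ k) : k < N →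
    ∀ v ∈ (a k).tail, ∀ (p : ℕ) (y : A), x.length ≤ p → v[p]? ≠ some (Sum.inr (y, 0)) := by
  induction k, hik using Nat.le_induction with
  | base =>
    intro _ v hv p y hp
    rw [hi] at hv
    simp only [List.tail_cons, List.mem_singleton] at hv
    subst hv
    rw [List.getElem?_eq_none hp]; simp
  | succ k hk ih =>
    intro hkN
    have ih := ih (by omega)
    obtain ⟨vs1, v, hv⟩ := hw k (by omega)
    have hs := hstep k hkN
    rw [hv] at hs ih
    obtain ⟨vs', ht, hd⟩ := step_desc bot (op k) b vs1 v _ hs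
    rw [ht]
    simp only [List.tail_cons] at ih ⊢
    have hv1 : ∀ v' ∈ vs1, ∀ (p : ℕ) (y : A), x.length ≤ p →
        v'[p]? ≠ some (Sum.inr (y, 0)) := fun v' hv' => ih v' (by simp [hv'])
    have hvv := ih v (by simp)
    have hpush : ∀ c : Letter A, (∀ y, c ≠ Sum.inr (y, 0)) → ∀ v' ∈ vs1 ++ [v ++ [c]],
        ∀ (p : ℕ) (y : A), x.length ≤ p → v'[p]? ≠ some (Sum.inr (y, 0)) := by
      intro c hc v' hv' p y hp
      rcases List.mem_append.1 hv' with h | h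
      · exact hv1 v' h p y hp
      · rw [List.mem_singleton] at h
        subst h
        rw [List.getElem?_append]
        split_ifs
        · exact hvv p y hp
        · rw [List.getElem?_singleton]
          split_ifs
          · simpa using hc y
          · simp
    rcases hd with h | h | ⟨c, h⟩ | ⟨c, h⟩ | ⟨v', c, h1, h2, h⟩
    · exact fun v' hv' => ih v' (h.subset hv')
    · intro v' hv'
      rw [h] at hv'
      exact ih v' (by simpa using hv')
    · rw [h]; exact hpush _ (by simp)
    · rw [h]; exact hpush _ (by simp)
    · rw [h]
      intro v'' hv'' p y hp
      rcases List.mem_append.1 hv'' with h | h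
      · exact hv1 v'' h p y hp
      · rw [List.mem_singleton] at h
        subst h
        intro hc
        refine hvv p y hp ?_
        rw [h1, List.getElem?_append_left, hc]
        exact (List.getElem?_eq_some_iff.1 hc).1

/-- As long as `[b, Pop₁ z]` is not visited, letters with link `1` only occur on top of `z`. -/
theorem new_inv (bot b : _) (a : ℕ → Stack2 A) (op : ℕ → Op A) (N i : ℕ) (z : Word A)
    (hstep : ∀ k, k + 1 < N → applyOp bot (op k) (a k) = some (a (k + 1)))
    (hw : ∀ k, k < N → ∃ vs1 v, a k = b :: (vs1 ++ [v]))
    (hz : ∀ x, Sum.inr (x, 1) ∉ z)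
    (hi : a i = [b, z]) (hnv : ∀ k, i < k → k < N → 1 < z.length → a k ≠ [b, z.dropLast])
    (k : ℕ) (hik : i ≤ k) : k < N →
    (∃ v0 rest, a k = b :: v0 :: rest ∧ z <+: v0) ∧
    ∀ v ∈ (a k).tail, ∀ (p : ℕ) (y : A), v[p]? = some (Sum.inr (y, 1)) →
      z.length ≤ p ∧ z <+: v := by
  induction k, hik using Nat.le_induction with
  | base =>
    intro _
    refine ⟨⟨z, [], hi, List.prefix_rfl⟩, ?_⟩
    intro v hv p y hp
    rw [hi] at hv
    simp only [List.tail_cons, List.mem_singleton] at hv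
    subst hv
    exact absurd (List.mem_of_getElem? hp) (hz y)
  | succ k hk ih =>
    intro hkN
    obtain ⟨⟨v0, rest, h0, hz0⟩, ih⟩ := ih (by omega)
    obtain ⟨vs1, v, hv⟩ := hw k (by omega)
    have hs := hstep k hkN
    have hnv := hnv (k + 1) (by omega) hkN
    obtain ⟨ws1, w', hw'⟩ := hw (k + 1) hkN
    rw [hv] at hs ih h0
    simp only [List.cons.injEq, true_and] at h0
    obtain ⟨vs', ht, hd⟩ := step_desc bot (op k) b vs1 v _ hs
    rw [ht] at hnv hw' ⊢
    simp only [List.cons.injEq, true_and] at hw'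
    simp only [List.tail_cons] at ih ⊢
    have hv1 : ∀ v' ∈ vs1, ∀ (p : ℕ) (y : A), v'[p]? = some (Sum.inr (y, 1)) →
      z.length ≤ p ∧ z <+: v' := fun v' hv' => ih v' (by simp [hv'])
    have hvv := ih v (by simp)
    -- pushes
    have hpush : ∀ c : Letter A, (∀ y, c = Sum.inr (y, 1) → vs1 = []) →
        vs' = vs1 ++ [v ++ [c]] →
        (∃ v0 rest, b :: vs' = b :: v0 :: rest ∧ z <+: v0) ∧
        ∀ v ∈ vs', ∀ (p : ℕ) (y : A), v[p]? = some (Sum.inr (y, 1)) →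
          z.length ≤ p ∧ z <+: v := by
      intro c hc h
      subst h
      have hbot : vs1 = [] → z <+: v := by
        rintro rfl
        simp only [List.nil_append, List.cons.injEq] at h0
        rw [h0.1]; exact hz0
      constructor
      · cases vs1 with
        | nil => exact ⟨_, _, rfl, (hbot rfl).trans (List.prefix_append _ _)⟩
        | cons r rs =>
          simp only [List.cons_append, List.cons.injEq] at h0
          exact ⟨_, _, rfl, by rw [h0.1]; exact hz0⟩
      · intro v' hv' p y hp
        rcases List.mem_append.1 hv' with h | h
        · exact hv1 v' h p y hp
        · rw [List.mem_singleton] at h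
          subst h
          rw [List.getElem?_append] at hp
          split_ifs at hp
          · obtain ⟨h1, h2⟩ := hvv p y hp
            exact ⟨h1, h2.trans (List.prefix_append _ _)⟩
          · rw [List.getElem?_singleton] at hp
            split_ifs at hp
            · have := hbot (hc y (by simpa using hp))
              have hl := this.length_le
              exact ⟨by omega, this.trans (List.prefix_append _ _)⟩
    rcases hd with h | h | ⟨c, h⟩ | ⟨c, h⟩ | ⟨v', c, h1, h2, h⟩
    · refine ⟨?_, fun v' hv' => ih v' (h.subset hv')⟩
      cases vs' with
      | nil => simp at hw'
      | cons r rs =>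
        rw [h0, List.cons_prefix_cons] at h
        exact ⟨_, _, rfl, by rw [h.1]; exact hz0⟩
    · subst h
      refine ⟨⟨v0, rest ++ [v], by rw [h0]; rfl, hz0⟩, ?_⟩
      intro v' hv'
      exact ih v' (by simpa using hv')
    · exact hpush _ (by simp) h
    · refine hpush _ ?_ h
      intro y hy
      simp only [Sum.inr.injEq, Prod.mk.injEq] at hy
      exact List.length_eq_zero_iff.1 (by omega)
    · subst h
      constructor
      · cases vs1 with
        | nil =>
          simp only [List.nil_append, List.cons.injEq] at h0
          refine ⟨_, _, rfl, ?_⟩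
          rw [← h0.1, h1, List.prefix_concat_iff] at hz0
          rcases hz0 with hz0 | hz0
          · exfalso
            have := List.length_pos_iff.2 h2
            refine hnv ?_ ?_
            · rw [hz0]; simp; omega
            · rw [hz0]; simp
          · exact hz0
        | cons r rs =>
          simp only [List.cons_append, List.cons.injEq] at h0
          exact ⟨_, _, rfl, by rw [h0.1]; exact hz0⟩
      · intro v'' hv'' p y hp
        rcases List.mem_append.1 hv'' with h | h
        · exact hv1 v'' h p y hp
        · rw [List.mem_singleton] at h
          subst h
          have hlt := (List.getElem?_eq_some_iff.1 hp).1
          obtain ⟨h3, h4⟩ := hvv p y (by rw [h1, List.getElem?_append_left hlt, hp])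
          refine ⟨h3, ?_⟩
          rw [h1] at h4
          exact List.prefix_of_prefix_length_le h4 (List.prefix_append _ _) (by omega)

theorem base_shell {S : CPS Q A Γ} (ρ : Run S) (b : Word A) (N : ℕ) (hN : N ≤ ρ.len)
    (hend : ρ.stk N = [b])
    (hw : ∀ k, k < N → ∃ vs1 v, ρ.stk k = b :: (vs1 ++ [v]))
    (i : ℕ) (z : Word A) (hiN : i < N) (hi : ρ.stk i = [b, z]) : RetShell ρ i N := by
  refine ⟨hiN, hN, ?_, ?_⟩
  · rw [hi, hend]; simp [pop2]
  · intro k _ hk hsub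
    have := hsub.length_le
    obtain ⟨vs1, v, hv⟩ := hw k hk
    rw [hv, hend] at this
    simp at this

/-- Every run over the base that ends with a collapse on a fresh link is a return. -/
theorem retSeg_of_collapse {S : CPS Q A Γ} (ρ : Run S) (b : Word A) (N : ℕ)
    (hN : N ≤ ρ.len) (hend : ρ.stk N = [b])
    (hw : ∀ k, k < N → ∃ vs1 v, ρ.stk k = b :: (vs1 ++ [v]))
    (hop : ρ.op (N - 1) = Op.collapse) :
    ∀ (m : ℕ) (z : Word A), z.length = m → (∀ x, Sum.inr (x, 1) ∉ z) →
      ∀ i, i < N → ρ.stk i = [b, z] → RetSeg ρ i N := by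
  intro m
  induction m with
  | zero | succ m ih => ?_
  all_goals
    intro z hzm hz i hiN hi
    have hsh := base_shell ρ b N hN hend hw i z hiN hi
    by_cases hvis : ∃ k, i < k ∧ k < N ∧ 1 < z.length ∧ ρ.stk k = [b, z.dropLast]
    · obtain ⟨k, h1, h2, h3, h4⟩ := hvis
      first
      | (exfalso; omega)
      | refine RetSeg.sub hsh h1 h2.le ?_ (ih z.dropLast (by simp; omega)
          (fun x hx => hz x (List.mem_of_mem_dropLast hx)) k h2 h4)
        rw [hi, h4]
        simp [pop1, h3]
    · have hstep : ∀ k, k < N →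
          applyOp S.bot (ρ.op k) (ρ.stk k) = some (ρ.stk (k + 1)) := by
        intro k hk
        obtain ⟨_, _, _, h⟩ := ρ.ok k (by omega)
        exact h
      have hinv := (new_inv S.bot b ρ.stk ρ.op N i z (fun k hk => hstep k (by omega)) hw hz hi
        (fun k h1 h2 h3 h4 => hvis ⟨k, h1, h2, h3, h4⟩) (N - 1) (by omega) (by omega)).2
      obtain ⟨vs1, v, hv⟩ := hw (N - 1) (by omega)
      have hs := hstep (N - 1) (by omega)
      rw [Nat.sub_add_cancel (by omega), hend, hop, hv] at hs
      rw [hv] at hinv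
      have hvv := hinv v (by simp)
      have hg := base_top2 b vs1 v
      have htop : ∃ v' x, v = v' ++ [Sum.inr (x, 1)] := by
        simp only [top2] at hg
        simp only [applyOp, collapse, top1, hg, Option.bind_some] at hs
        rcases word_cases v with rfl | ⟨v', c, rfl⟩
        · simp at hs
        · simp only [List.getLast?_concat] at hs
          rcases c with x | ⟨x, k⟩
          · simp only [pop1, hg] at hs
            split_ifs at hs
            have := congrArg (Option.map List.length) hs
            simp at this
          · simp only at hs
            split_ifs at hs with hk
            have := congrArg (Option.map List.length) hs
            simp at this
            have hk1 : k = 1 := by omega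
            subst hk1
            exact ⟨v', x, rfl⟩
      obtain ⟨v', x, hvx⟩ := htop
      obtain ⟨h1, h2⟩ := hvv v'.length x (by rw [hvx]; simp)
      refine RetSeg.collapse hsh hop ⟨z, v, ?_, ?_, h2, ?_⟩
      · rw [hi]; rfl
      · rw [hv]; exact hg
      · rintro rfl
        rw [hvx] at h1
        simp at h1

/-- Unfolding of a return: the last operation, and in the collapse case a visited
stack of the same width whose topmost word is shorter. -/
theorem retSeg_unfold {S : CPS Q A Γ} {ρ : Run S} {i j : ℕ} (h : RetSeg ρ i j) :
    ρ.op (j - 1) = Op.pop2 ∨ (ρ.op (j - 1) = Op.collapse ∧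
      ∃ k w w', i ≤ k ∧ k < j ∧ CPG.pop2 (ρ.stk k) = some (ρ.stk j) ∧ top2 (ρ.stk k) = some w ∧
        top2 (ρ.stk (j - 1)) = some w' ∧ w.length < w'.length) := by
  induction h with
  | pop2 h hop => exact Or.inl hop
  | @collapse i j h hop hpre =>
    obtain ⟨w, w', h1, h2, h3, h4⟩ := hpre
    refine Or.inr ⟨hop, i, w, w', le_rfl, h.1, h.2.2.1, h1, h2, ?_⟩
    exact lt_of_le_of_ne h3.length_le fun he => h4 (h3.eq_of_length he)
  | sub h hik hkj hpop hret ih =>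
    rcases ih with ih | ⟨h1, k', w, w', h2, h3⟩
    · exact Or.inl ih
    · exact Or.inr ⟨h1, k', w, w', by omega, h3⟩

/-- The old links of `w`. -/
def oldLink (w : Word A) (p : ℕ) : ℕ :=
  match w[p]? with
  | some (Sum.inr (_, k)) => k
  | _ => 0

theorem simW_down0 (w : Word A) (n : ℕ) : simW (oldLink w) n (down0 w) = w := by
  apply List.ext_getElem?
  intro p
  simp only [simW, down0, List.getElem?_mapIdx, List.getElem?_map]
  rcases h : w[p]? with _ | (x | ⟨x, k⟩)
  · rfl
  · rfl
  · simp [simL, oldLink, h]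

theorem down0_no_one (w : Word A) (x : A) : Sum.inr (x, 1) ∉ down0 w := by
  simp only [down0, List.mem_map, not_exists, not_and]
  rintro (y | ⟨y, k⟩) _ <;> simp

theorem oldLink_le {w : Word A} {n : ℕ} (h : ∀ x k, Sum.inr (x, k) ∈ w → k ≤ n) (p : ℕ) :
    oldLink w p ≤ n := by
  unfold oldLink
  rcases hp : w[p]? with _ | (x | ⟨x, k⟩)
  · simp
  · simp
  · exact h x k (List.mem_of_getElem? hp)

/-- From the small return to the large one. -/
theorem ret_of_exRet (S : CPS Q A Γ) (old : ℕ → ℕ) (u : Stack2 A) (hu : u ≠ []) (b : Word A)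
    (ρ : Run S) (z : Word A) (h0 : ρ.stk 0 = [b, z]) (hend : ρ.stk ρ.len = [b])
    (hret : RetSeg ρ 0 ρ.len) :
    ∃ ρ' : Run S, (∀ k, ρ'.cfg k = ((ρ.cfg k).1, simS old u (ρ.stk k))) ∧ ρ'.len = ρ.len ∧
      RetSeg ρ' 0 ρ.len := by
  have hstep : ∀ k, k < ρ.len →
      applyOp S.bot (ρ.op k) (ρ.stk k) = some (ρ.stk (k + 1)) := by
    intro k hk
    obtain ⟨_, _, _, h⟩ := ρ.ok k hk
    exact h
  have hw : ∀ k, k < ρ.len → ∃ vs1 v, ρ.stk k = b :: (vs1 ++ [v]) := by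
    intro k
    induction k with
    | zero => intro _; exact ⟨[], z, h0⟩
    | succ k ih =>
      intro hk
      obtain ⟨vs1, v, hv⟩ := ih (by omega)
      have hs := hstep k (by omega)
      rw [hv] at hs
      obtain ⟨vs', ht, -⟩ := step_desc S.bot _ b vs1 v _ hs
      rcases word_cases vs' with rfl | ⟨ws, w, rfl⟩
      · exfalso
        refine hret.shell.2.2.2 (k + 1) (by omega) hk ?_
        rw [ht, hend]; exact Substack.refl _
      · exact ⟨ws, w, ht⟩
  let ρ' : Run S :=
    { len := ρ.len
      cfg := fun k => ((ρ.cfg k).1, simS old u (ρ.stk k))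
      lab := ρ.lab
      op := ρ.op
      ok := by
        intro k hk
        obtain ⟨σ, h1, h2, h3⟩ := ρ.ok k hk
        obtain ⟨vs1, v, hv⟩ := hw k hk
        have hs := hstep k hk
        refine ⟨σ, ?_, h2, ?_⟩
        · change symS (ρ.stk k) = _ at h1
          change symS (simS old u (ρ.stk k)) = _
          rw [← h1, hv, simS_symS]
        · change applyOp S.bot (ρ.op k) (simS old u (ρ.stk k)) =
            some (simS old u (ρ.stk (k + 1)))
          rw [hv] at hs ⊢
          rw [simS_step _ _ _ hu, hs]
          · rfl
          · intro hop x hx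
            have hg := base_top2 b vs1 v
            simp only [top2] at hg
            rw [hop] at hs
            simp [applyOp, collapse, top1, hg, hx] at hs }
  refine ⟨ρ', fun _ => rfl, rfl, ?_⟩
  have hstk : ∀ k, ρ'.stk k = simS old u (ρ.stk k) := fun _ => rfl
  have key : ∀ i j, RetSeg ρ i j → j = ρ.len → RetSeg ρ' i j := by
    intro i j h
    have hshell : ∀ i j, RetShell ρ i j → j = ρ.len → RetShell ρ' i j := by
      rintro i j h rfl
      refine ⟨h.1, le_rfl, ?_, ?_⟩
      · have hp := h.2.2.1
        obtain ⟨vs1, v, hv⟩ := hw i h.1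
        rw [hstk, hstk]
        rw [hv] at hp ⊢
        rw [simS_pop2 _ _ hu, hp]; rfl
      · intro k _ hk hsub
        have hl := hsub.length_le
        obtain ⟨vs1, v, hv⟩ := hw k hk
        rw [hstk, hstk, hv, hend, simS_eq] at hl
        simp [simS] at hl
    induction h with
    | pop2 h hop => exact fun hj => RetSeg.pop2 (hshell _ _ h hj) hop
    | @collapse i j h hop hpre =>
      intro hj
      refine RetSeg.collapse (hshell _ _ h hj) hop ?_
      obtain ⟨w, w', h1, h2, h3, h4⟩ := hpre
      have hij := h.1
      obtain ⟨vs1, v, hv⟩ := hw i (by omega)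
      obtain ⟨vs2, v2, hv2⟩ := hw (j - 1) (by omega)
      rw [hv, base_top2, Option.some.injEq] at h1
      rw [hv2, base_top2, Option.some.injEq] at h2
      subst h1 h2
      refine ⟨_, _, by rw [hstk, hv, simS_top2], by rw [hstk, hv2, simS_top2],
        simW_prefix _ _ h3, ?_⟩
      intro he
      have := congrArg List.length he
      rw [simW_length, simW_length] at this
      exact h4 (h3.eq_of_length this)
    | @sub i k j h hik hkj hpop hret ih =>
      intro hj
      refine RetSeg.sub (hshell _ _ h hj) hik hkj ?_ (ih hj)
      have := h.1
      obtain ⟨vs1, v, hv⟩ := hw i (by omega)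
      rw [hstk, hstk]
      rw [hv] at hpop ⊢
      rw [simS_pop1, hpop]; rfl
  exact key 0 ρ.len hret rfl

/-- From the large return to the small one. -/
theorem exRet_of_ret (S : CPS Q A Γ) (old : ℕ → ℕ) (u : Stack2 A) (hu : u ≠ [])
    (hold : ∀ p, old p ≤ u.length) (b z : Word A) (hz : ∀ x, Sum.inr (x, 1) ∉ z)
    (ρ : Run S) (h0 : ρ.stk 0 = simS old u [b, z]) (hend : ρ.stk ρ.len = u)
    (hret : RetSeg ρ 0 ρ.len) :
    ∃ ρ' : Run S, (∀ k, (ρ'.cfg k).1 = (ρ.cfg k).1) ∧ ρ'.len = ρ.len ∧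
      ρ'.stk 0 = [b, z] ∧ ρ'.stk ρ.len = [b] ∧ RetSeg ρ' 0 ρ.len := by
  have hlen : 0 < ρ.len := hret.shell.1
  have hstep : ∀ k, k < ρ.len →
      applyOp S.bot (ρ.op k) (ρ.stk k) = some (ρ.stk (k + 1)) := by
    intro k hk
    obtain ⟨_, _, _, h⟩ := ρ.ok k hk
    exact h
  have hns : ∀ k, k < ρ.len → ¬ Substack (ρ.stk k) u := by
    intro k hk
    have := hret.shell.2.2.2 k (by omega) hk
    rwa [hend] at this
  let a : ℕ → Stack2 A := fun k =>
    Nat.rec [b, z] (fun k s => (applyOp S.bot (ρ.op k) s).getD [b]) k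
  have ha0 : a 0 = [b, z] := rfl
  have haS : ∀ k, a (k + 1) = (applyOp S.bot (ρ.op k) (a k)).getD [b] := fun _ => rfl
  clear_value a
  -- one step which is not a collapse on an old link
  have hone : ∀ k vs1 v, k < ρ.len → ρ.stk k = simS old u (a k) → a k = b :: (vs1 ++ [v]) →
      (ρ.op k = Op.collapse → ∀ x, v.getLast? ≠ some (Sum.inr (x, 0))) →
      applyOp S.bot (ρ.op k) (a k) = some (a (k + 1)) ∧
        ρ.stk (k + 1) = simS old u (a (k + 1)) ∧ ∃ vs', a (k + 1) = b :: vs' := by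
    intro k vs1 v hk h1 h2 h3
    have hs := hstep k hk
    have hS := haS k
    rw [h1] at hs
    rw [h2] at hs hS ⊢
    rw [simS_step _ _ _ hu _ _ _ _ h3, Option.map_eq_some_iff] at hs
    obtain ⟨t, ht, ht'⟩ := hs
    rw [ht, Option.getD_some] at hS
    rw [hS]
    obtain ⟨vs', h4, -⟩ := step_desc S.bot _ b vs1 v _ ht
    exact ⟨ht, ht'.symm, vs', h4⟩
  have hw : ∀ k, k < ρ.len → ρ.stk k = simS old u (a k) ∧
      ∃ vs1 v, a k = b :: (vs1 ++ [v]) := by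
    intro k
    induction k with
    | zero => intro _; exact ⟨by rw [h0, ha0], [], z, ha0⟩
    | succ k ih =>
      intro hk
      obtain ⟨h1, vs1, v, h2⟩ := ih (by omega)
      obtain ⟨-, h5, vs', h6⟩ := hone k vs1 v (by omega) h1 h2 (by
        intro hop x hx
        have hs := hstep k (by omega)
        rw [hop, h1, h2] at hs
        exact hns (k + 1) hk (simS_collapse_old old u hold b vs1 v x hx _ hs))
      refine ⟨h5, ?_⟩
      rcases word_cases vs' with rfl | ⟨ws, w, rfl⟩
      · exfalso
        refine hns (k + 1) hk ?_
        rw [h5, h6]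
        simpa [simS] using Substack.refl u
      · exact ⟨ws, w, h6⟩
  have hold' : ∀ k vs1 v, k < ρ.len → a k = b :: (vs1 ++ [v]) →
      (ρ.op k = Op.collapse → ∀ x, v.getLast? ≠ some (Sum.inr (x, 0))) := by
    intro k vs1 v hk h2 hop x hx
    have h1 := (hw k hk).1
    by_cases hkl : k + 1 < ρ.len
    · have hs := hstep k (by omega)
      rw [hop, h1, h2] at hs
      exact hns (k + 1) hkl (simS_collapse_old old u hold b vs1 v x hx _ hs)
    · obtain rfl : k = ρ.len - 1 := by omega
      rcases (retSeg_unfold hret) with hp | ⟨-, i, w, w', -, hi, hpop, ht, ht', hlt⟩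
      · rw [hp] at hop; cases hop
      · obtain ⟨hi1, ws, y, hi2⟩ := hw i hi
        rw [h1, h2, simS_top2, Option.some.injEq] at ht'
        have hws : ws = [] := by
          rw [hend, hi1, hi2, simS_eq, pop2] at hpop
          split_ifs at hpop
          have := congrArg (Option.map List.length) hpop
          simp at this
          exact this
        subst hws
        rw [hi1, hi2, simS_top2, Option.some.injEq] at ht
        rw [← ht, ← ht', simW_length, simW_length] at hlt
        have := no_old_inv S.bot b a ρ.op ρ.len i y
          (fun k hk => by
            obtain ⟨e1, e2, e3, e4⟩ := hw k (by omega)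
            refine (hone k e2 e3 (by omega) e1 e4 ?_).1
            intro hop x hx
            have hs := hstep k (by omega)
            rw [hop, e1, e4] at hs
            exact hns (k + 1) hk (simS_collapse_old old u hold b _ _ x hx _ hs))
          (fun k hk => (hw k hk).2) hi2 (ρ.len - 1) (by omega) (by omega) v
          (by rw [h2]; simp) (v.length - 1) x (by omega)
        rw [List.getLast?_eq_getElem?] at hx
        exact this hx
  have hall : ∀ k, k < ρ.len → applyOp S.bot (ρ.op k) (a k) = some (a (k + 1)) := by
    intro k hk
    obtain ⟨h1, vs1, v, h2⟩ := hw k hk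
    exact (hone k vs1 v hk h1 h2 (hold' k vs1 v hk h2)).1
  have haend : a ρ.len = [b] := by
    obtain ⟨h1, vs1, v, h2⟩ := hw (ρ.len - 1) (by omega)
    obtain ⟨-, h3, vs', h4⟩ := hone (ρ.len - 1) vs1 v (by omega) h1 h2
      (hold' _ vs1 v (by omega) h2)
    rw [Nat.sub_add_cancel hlen] at h3 h4
    rw [hend, h4] at h3
    have := congrArg List.length h3
    simp [simS] at this
    rw [h4, this]
  let ρ' : Run S :=
    { len := ρ.len
      cfg := fun k => ((ρ.cfg k).1, a k)
      lab := ρ.lab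
      op := ρ.op
      ok := by
        intro k hk
        obtain ⟨σ, h1, h2, h3⟩ := ρ.ok k hk
        obtain ⟨e1, vs1, v, e2⟩ := hw k hk
        refine ⟨σ, ?_, h2, hall k hk⟩
        change symS (ρ.stk k) = _ at h1
        change symS (a k) = _
        rw [← h1, e1, e2, simS_symS] }
  refine ⟨ρ', fun _ => rfl, rfl, ha0, haend, ?_⟩
  have hw' : ∀ k, k < ρ.len → ∃ vs1 v, ρ'.stk k = b :: (vs1 ++ [v]) :=
    fun k hk => (hw k hk).2
  rcases (retSeg_unfold hret) with hp | ⟨hc, -⟩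
  · exact RetSeg.pop2 (base_shell ρ' b ρ.len le_rfl haend hw' 0 z hlen ha0) hp
  · exact retSeg_of_collapse ρ' b ρ.len le_rfl haend hw' hc _ z rfl hz 0 hlen ha0

end Helpers

/-- For `|s| ≥ 2`, there is a return from `(q,s)` to `(q',Pop₂(s))`
iff `(q,q') ∈ ExRet(TOP₂(s))`. -/
theorem return_iff_exRet
    {Q A Γ : Type} [DecidableEq A] (S : CPS Q A Γ)
    (s : Stack2 A) (hs : IsStack S.bot s) (h2 : 2 ≤ s.length) (q q' : Q) :
    (∃ ρ : Run S, ρ.cfg 0 = (q, s) ∧ ρ.cfg ρ.len = (q', s.dropLast) ∧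
      RetSeg ρ 0 ρ.len) ↔
    ∃ w, top2 s = some w ∧ (q, q') ∈ ExRet S w := by
  have hlinks := isStack_linksOk hs
  rcases word_cases s with rfl | ⟨u, w, rfl⟩
  · simp at h2
  have hu : u ≠ [] := by rintro rfl; simp at h2
  have hsim : simS (oldLink w) u [down0 w, down0 w] = u ++ [w] := by
    simp [simS, simW_down0]
  have htop : top2 (u ++ [w]) = some w := by simp [top2]
  simp only [htop, Option.some.injEq, List.dropLast_concat, exists_eq_left', ExRet,
    Set.mem_ofPred_eq]
  constructor
  · rintro ⟨ρ, h0, hend, hret⟩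
    obtain ⟨ρ', e1, e2, e3, e4, e5⟩ := exRet_of_ret S (oldLink w) u hu
      (oldLink_le hlinks.of_snoc.2) (down0 w) (down0 w) (down0_no_one w) ρ
      (by rw [hsim, Run.stk, h0]) (by rw [Run.stk, hend]) hret
    refine ⟨ρ', ?_, ?_, ?_⟩
    · exact Prod.ext (by rw [e1, h0]) e3
    · rw [e2]; exact Prod.ext (by rw [e1, hend]) e4
    · rw [e2]; exact e5
  · rintro ⟨ρ, h0, hend, hret⟩
    obtain ⟨ρ', e1, e2, e3⟩ := ret_of_exRet S (oldLink w) u hu (down0 w) ρ (down0 w)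
      (by rw [Run.stk, h0]) (by rw [Run.stk, hend]) hret
    refine ⟨ρ', ?_, ?_, ?_⟩
    · rw [e1, Run.stk, h0, hsim]
    · rw [e2, e1, Run.stk, hend]; simp [simS]
    · rw [e2]; exact e3

end CPG
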